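/- Let n ≥ 1, m ≥ 1, and let c_1, …, c_m be clauses over Boolean variables x_1, …, x_n, each clause a nonempty set of literals over these variables such that no clause contains both a variable and its negation. Define the digraph G = (V, E) as follows. V contains vertices x'_i, x_i^0, x_i^1 for 1 ≤ i ≤ n; vertices c'_j for 1 ≤ j ≤ m; a vertex c_j^k for every pair (j, k) such that x_k ∈ c_j or ¬x_k ∈ c_j; and two vertices f_1, f_2. E consists of the edges (x'_i, x_i^0) and (x'_i, x_i^1) for 1 ≤ i ≤ n; (x_i^0, x'_{i+1}) and (x_i^1, x'_{i+1}) for 1 ≤ i ≤ n−1; (x_n^0, c'_1) and (x_n^1, c'_1); (c'_j, c_j^k) for every vertex c_j^k; (c_j^k, c'_{j+1}) for every 1 ≤ j ≤ m−1 and every vertex c_j^k; (c_m^k, f_1) for every vertex c_m^k; (f_1, f_2); and (f_2, x'_1). Let R consist of the pairs (x_k^1, c_j^k) for every j, k with x_k ∈ c_j; the pairs (x_k^0, c_j^k) for every j, k with ¬x_k ∈ c_j; and the pairs (x'_1, f_1) and (f_1, f_2). Then G is strongly connected, and G contains a path satisfying the First-Visits conditions for R if and only if there exists a truth assignment to x_1,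 …, x_n satisfying every clause c_1, …, c_m. -/

import Mathlib

/-- A path of length `k` in the digraph with edge relation `E`. -/
def IsPath {V : Type*} (E : V → V → Prop) (k : ℕ) (ρ : ℕ → V) : Prop :=
  ∀ i < k, E (ρ i) (ρ (i + 1))

/-- The path `ρ 0, …, ρ k` satisfies the First-Visits conditions for `R`. -/
def FirstVisits {V : Type*} (R : Set (V × V)) (k : ℕ) (ρ : ℕ → V) : Prop :=
  ∀ p ∈ R, (∃ i ≤ k, ρ i = p.1) ∧ ∀ j ≤ k, ρ j = p.2 → ∃ i < j, ρ i = p.1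

/-- The (potential) vertices of the digraph built from a CNF formula with `n`
variables and `m` clauses: `xprime i` is `x'_{i+1}`, `xval i b` is
`x_{i+1}^b`, `cprime j` is `c'_{j+1}`, `cvar j k` is `c_{j+1}^{k+1}` (only
present when variable `x_{k+1}` occurs in clause `c_{j+1}`), plus `f1, f2`.
Indices are 0-based. -/
inductive Vtx (n m : ℕ) where
  | xprime (i : Fin n)
  | xval (i : Fin n) (b : Bool)
  | cprime (j : Fin m)
  | cvar (j : Fin m) (k : Fin n)
  | f1
  | f2
deriving DecidableEq

/-- `pol j k = some true` means the literal `x_{k+1}` occurs in clause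
`c_{j+1}`, `pol j k = some false` means `¬x_{k+1}` occurs in it, and
`pol j k = none` means the variable `x_{k+1}` does not occur in `c_{j+1}`.
(This representation ensures no clause contains both a variable and its
negation.) A vertex is valid if it belongs to the constructed digraph. -/
def VtxValid {n m : ℕ} (pol : Fin m → Fin n → Option Bool) : Vtx n m → Prop
  | .cvar j k => pol j k ≠ none
  | _ => True

/-- The edges of the digraph built from the CNF formula `pol`. -/
inductive Edge {n m : ℕ} (pol : Fin m → Fin n → Option Bool) :
    Vtx n m → Vtx n m → Prop where
  | xpx (i : Fin n) (b : Bool) : Edge pol (.xprime i) (.xval i b)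
  | xxp (i i' : Fin n) (b : Bool) (h : (i' : ℕ) = (i : ℕ) + 1) :
      Edge pol (.xval i b) (.xprime i')
  | xc (i : Fin n) (b : Bool) (j : Fin m) (hi : (i : ℕ) = n - 1)
      (hj : (j : ℕ) = 0) : Edge pol (.xval i b) (.cprime j)
  | cc (j : Fin m) (k : Fin n) (h : pol j k ≠ none) :
      Edge pol (.cprime j) (.cvar j k)
  | cvc (j j' : Fin m) (k : Fin n) (h : pol j k ≠ none)
      (hj : (j' : ℕ) = (j : ℕ) + 1) : Edge pol (.cvar j k) (.cprime j')
  | cf (j : Fin m) (k : Fin n) (h : pol j k ≠ none) (hj : (j : ℕ) = m - 1) :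
      Edge pol (.cvar j k) .f1
  | ff : Edge pol .f1 .f2
  | fx (i : Fin n) (hi : (i : ℕ) = 0) : Edge pol .f2 (.xprime i)

/-- The constraint relation `R`: pairs `(x_k^1, c_j^k)` when `x_k ∈ c_j`,
pairs `(x_k^0, c_j^k)` when `¬x_k ∈ c_j`, plus `(x'_1, f_1)` and `(f_1, f_2)`. -/
inductive SatR {n m : ℕ} (pol : Fin m → Fin n → Option Bool) :
    Vtx n m → Vtx n m → Prop where
  | lit (j : Fin m) (k : Fin n) (b : Bool) (h : pol j k = some b) :
      SatR pol (.xval k b) (.cvar j k)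
  | xf (i : Fin n) (hi : (i : ℕ) = 0) : SatR pol (.xprime i) .f1
  | ff : SatR pol .f1 .f2

/-!
Grade the vertices by their position along one lap
`x'_1, x_1^b, …, x'_n, x_n^b, c'_1, c_1^k, …, c'_m, c_m^k, f_1, f_2`. The digraph is then cyclically
layered: its edges are exactly the pairs in consecutive layers, and all layers are nonempty, which
makes it strongly connected.

Since `x'_1` has to precede `f_1`, and `f_1` has to precede `f_2`, a path meeting the First-Visits
conditions starts at `x'_1` and makes a full lap up to `f_1`. The vertices `x_k^b` on this lap
define an assignment, and the vertex `c_j^k` chosen on it points to a literal of `c_j` that is true.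
Conversely, one lap along a satisfying assignment that picks a true literal in each clause, followed
by one lap along the complementary assignment, visits everything that has to be visited.
-/

section Digraph

variable {V : Type*}

theorem reflTransGen_of_cyclic_layers {E : V → V → Prop} {L : ℕ} {layer : V → ℕ}
    (hlt : ∀ v, layer v < L) (hsurj : ∀ r < L, ∃ v, layer v = r)
    (hE : ∀ u v, layer v = (layer u + 1) % L → E u v) (u v : V) :
    Relation.ReflTransGen E u v := by
  have reach : ∀ d w, layer w = (layer u + d + 1) % L → Relation.ReflTransGen E u w := by
    intro d
    induction d with
    | zero => exact fun w hw => .single (hE u w hw)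
    | succ d ih =>
      intro w hw
      obtain ⟨x, hx⟩ := hsurj ((layer u + d + 1) % L) (Nat.mod_lt _ (hlt u).pos)
      exact (ih x hx).tail (hE x w (by rw [hw, hx, Nat.mod_add_mod, add_assoc _ d]))
  apply reach (layer v + (L - 1 - layer u))
  have hu := hlt u
  rw [show layer u + (layer v + (L - 1 - layer u)) + 1 = layer v + L by lia,
    Nat.add_mod_right, Nat.mod_eq_of_lt (hlt v)]

theorem FirstVisits.exists_visit_before {R : Set (V × V)} {k : ℕ} {ρ : ℕ → V}
    (h : FirstVisits R k ρ) {u v : V} (huv : (u, v) ∈ R) :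
    ∃ t ≤ k, ρ t = u ∧ ∀ s ≤ t, ρ s ≠ v := by
  classical
  have hvisit : ∃ t, t ≤ k ∧ ρ t = u := (h _ huv).1
  obtain ⟨htk, htu⟩ := Nat.find_spec hvisit
  refine ⟨Nat.find hvisit, htk, htu, fun s hs hsv => ?_⟩
  obtain ⟨i, his, hiu⟩ := (h _ huv).2 s (hs.trans htk) hsv
  exact Nat.find_min hvisit (his.trans_le hs) ⟨by lia, hiu⟩

end Digraph

section Reduction

variable {n m : ℕ} {pol : Fin m → Fin n → Option Bool}

namespace Vtx

/-- The layer of a vertex: its position, counted from `0`, on any closed walk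
`x'_1, x_1^b, …, x'_n, x_n^b, c'_1, c_1^k, …, c'_m, c_m^k, f_1, f_2` that starts at `x'_1`. -/
def rank : Vtx n m → ℕ
  | .xprime i => 2 * i
  | .xval i _ => 2 * i + 1
  | .cprime j => 2 * n + 2 * j
  | .cvar j _ => 2 * n + 2 * j + 1
  | .f1 => 2 * n + 2 * m
  | .f2 => 2 * n + 2 * m + 1

theorem rank_lt (v : Vtx n m) : v.rank < 2 * n + 2 * m + 2 := by
  cases v <;> simp only [rank] <;> lia

theorem exists_eq_xval_of_rank_eq {v : Vtx n m} {i : Fin n} (h : v.rank = 2 * i + 1) :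
    ∃ b, v = .xval i b := by
  cases v <;> grind [rank, Fin.ext_iff]

theorem exists_eq_cvar_of_rank_eq {v : Vtx n m} {j : Fin m} (h : v.rank = 2 * n + 2 * j + 1) :
    ∃ k, v = .cvar j k := by
  cases v <;> grind [rank, Fin.ext_iff]

/-- The vertices of the lap that follows the assignment `a` through the variables and picks the
variable `κ j` in the clause `j`. -/
def OnLap (a : Fin n → Bool) (κ : Fin m → Fin n) : Vtx n m → Prop
  | .xval i b => b = a i
  | .cvar j k => k = κ j
  | _ => True

variable {a : Fin n → Bool} {κ : Fin m → Fin n}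

theorem exists_onLap_rank_eq (a : Fin n → Bool) (κ : Fin m → Fin n) {r : ℕ}
    (hr : r < 2 * n + 2 * m + 2) : ∃ v : Vtx n m, v.OnLap a κ ∧ v.rank = r := by
  obtain ⟨q, rfl | rfl⟩ := Nat.even_or_odd' r
  · rcases lt_or_ge q n with hq | hq
    · exact ⟨.xprime ⟨q, hq⟩, trivial, rfl⟩
    rcases lt_or_ge q (n + m) with hq' | hq'
    · exact ⟨.cprime ⟨q - n, by lia⟩, trivial, by simp only [rank]; lia⟩
    · exact ⟨.f1, trivial, by simp only [rank]; lia⟩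
  · rcases lt_or_ge q n with hq | hq
    · exact ⟨.xval ⟨q, hq⟩ _, rfl, rfl⟩
    rcases lt_or_ge q (n + m) with hq' | hq'
    · exact ⟨.cvar ⟨q - n, by lia⟩ _, rfl, by simp only [rank]; lia⟩
    · exact ⟨.f2, trivial, by simp only [rank]; lia⟩

theorem OnLap.eq_of_rank_eq {u v : Vtx n m} (hu : u.OnLap a κ) (hv : v.OnLap a κ)
    (h : u.rank = v.rank) : u = v := by
  cases u <;> cases v <;> grind [rank, OnLap]

theorem OnLap.vtxValid {v : Vtx n m} (hv : v.OnLap a κ) (hκ : ∀ j, pol j (κ j) ≠ none) :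
    VtxValid pol v := by
  cases v with
  | cvar j k => exact hv ▸ hκ j
  | _ => trivial

end Vtx

theorem Edge.rank_eq {u v : Vtx n m} (h : Edge pol u v) (hu : u ≠ .f2) :
    v.rank = u.rank + 1 := by
  cases h <;> grind [Vtx.rank]

theorem edge_of_rank_eq (hn : 1 ≤ n) (hm : 1 ≤ m) {u v : Vtx n m} (hu : VtxValid pol u)
    (hv : VtxValid pol v) (h : v.rank = (u.rank + 1) % (2 * n + 2 * m + 2)) : Edge pol u v := by
  have hstep : v.rank = u.rank + 1 ∨ u.rank = 2 * n + 2 * m + 1 ∧ v.rank = 0 := by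
    have hle : u.rank + 1 ≤ 2 * n + 2 * m + 2 := u.rank_lt
    rcases hle.lt_or_eq with hlt | heq
    · exact .inl (h.trans (Nat.mod_eq_of_lt hlt))
    · exact .inr ⟨Nat.succ.inj heq, by rw [h, heq, Nat.mod_self]⟩
  cases u <;> cases v <;> grind [Vtx.rank, VtxValid, Edge, Fin.ext_iff]

theorem SatR.rank_lt {u v : Vtx n m} (h : SatR pol u v) : u.rank < v.rank := by
  cases h <;> grind [Vtx.rank]

theorem SatR.onLap_or_onLap_not {u v : Vtx n m} (h : SatR pol u v) (a : Fin n → Bool)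
    (κ : Fin m → Fin n) : u.OnLap a κ ∨ u.OnLap (fun k => !a k) κ := by
  cases h with
  | lit j k b _ => exact Bool.eq_or_eq_not b (a k)
  | _ => exact .inl trivial

/-- The vertices of the digraph of the formula `pol`. -/
abbrev ValidVtx (pol : Fin m → Fin n → Option Bool) : Type := {v : Vtx n m // VtxValid pol v}

/-- The edge relation of the digraph of `pol`, on its own vertices. -/
abbrev ValidEdge (pol : Fin m → Fin n → Option Bool) (u v : ValidVtx pol) : Prop :=
  Edge pol u.1 v.1

/-- The relation `R` of the formula `pol`, as a set of pairs of vertices of its digraph. -/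
abbrev visitOrder (pol : Fin m → Fin n → Option Bool) : Set (ValidVtx pol × ValidVtx pol) :=
  {p | SatR pol p.1.1 p.2.1}

theorem reflTransGen_validEdge (hn : 1 ≤ n) (hm : 1 ≤ m) (hne : ∀ j, ∃ k, pol j k ≠ none)
    (u v : ValidVtx pol) : Relation.ReflTransGen (ValidEdge pol) u v := by
  choose κ hκ using hne
  refine reflTransGen_of_cyclic_layers (layer := fun v : ValidVtx pol => v.1.rank)
    (fun v => v.1.rank_lt) (fun r hr => ?_) (fun u v => edge_of_rank_eq hn hm u.2 v.2) u v
  obtain ⟨v, hv, hvr⟩ := Vtx.exists_onLap_rank_eq (fun _ => true) κ hr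
  exact ⟨⟨v, hv.vtxValid hκ⟩, hvr⟩

section PathToAssignment

variable {k : ℕ} {ρ : ℕ → ValidVtx pol}

theorem IsPath.rank_eq_add (hpath : IsPath (ValidEdge pol) k ρ) {t : ℕ} (htk : t ≤ k)
    (hf2 : ∀ s < t, (ρ s).1 ≠ .f2) : ∀ s ≤ t, (ρ s).1.rank = (ρ 0).1.rank + s := by
  intro s
  induction s with
  | zero => exact fun _ => rfl
  | succ s ih =>
    intro hs
    rw [(hpath s (by lia)).rank_eq (hf2 s hs), ih (by lia), add_assoc]

theorem le_length_and_rank_eq_of_firstVisits (hn : 1 ≤ n) (hpath : IsPath (ValidEdge pol) k ρ)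
    (hfirst : FirstVisits (visitOrder pol) k ρ) :
    2 * n + 2 * m ≤ k ∧ ∀ s ≤ 2 * n + 2 * m, (ρ s).1.rank = s := by
  obtain ⟨t, htk, htf1, htf2⟩ :=
    hfirst.exists_visit_before (u := ⟨.f1, trivial⟩) (v := ⟨.f2, trivial⟩) SatR.ff
  have hrank := hpath.rank_eq_add htk fun s hs h => htf2 s hs.le (Subtype.ext h)
  obtain ⟨i, hit, hi⟩ :=
    (hfirst (⟨.xprime ⟨0, hn⟩, trivial⟩, ⟨.f1, trivial⟩) (SatR.xf _ rfl)).2 t htk htf1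
  have hstart : (ρ 0).1.rank = 0 := by
    have hzero : (ρ i).1.rank = 0 := by rw [hi]; rfl
    have := hrank i hit.le
    lia
  have ht : t = 2 * n + 2 * m := by
    have hlast : (ρ t).1.rank = 2 * n + 2 * m := by rw [htf1]; rfl
    have := hrank t le_rfl
    lia
  subst ht
  exact ⟨htk, fun s hs => by rw [hrank s hs, hstart, zero_add]⟩

theorem exists_satisfying_of_firstVisits (hn : 1 ≤ n) (hpath : IsPath (ValidEdge pol) k ρ)
    (hfirst : FirstVisits (visitOrder pol) k ρ) :
    ∃ a : Fin n → Bool, ∀ j, ∃ i, pol j i = some (a i) := by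
  obtain ⟨hk, hrank⟩ := le_length_and_rank_eq_of_firstVisits hn hpath hfirst
  have hval (i : Fin n) : ∃ b, (ρ (2 * i + 1)).1 = .xval i b :=
    Vtx.exists_eq_xval_of_rank_eq (hrank _ (by lia))
  choose a ha using hval
  refine ⟨a, fun j => ?_⟩
  obtain ⟨i, hi⟩ : ∃ i, (ρ (2 * n + 2 * j + 1)).1 = .cvar j i :=
    Vtx.exists_eq_cvar_of_rank_eq (hrank _ (by lia))
  have hvalid : VtxValid pol (.cvar j i) := hi ▸ (ρ (2 * n + 2 * j + 1)).2
  obtain ⟨b, hb⟩ := Option.ne_none_iff_exists'.mp hvalid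
  obtain ⟨s, hs, hsb⟩ := (hfirst (⟨.xval i b, trivial⟩, ⟨.cvar j i, hvalid⟩)
    (SatR.lit j i b hb)).2 (2 * n + 2 * j + 1) (by lia) (Subtype.ext hi)
  have hs_eq : s = 2 * i + 1 := by rw [← hrank s (by lia), hsb]; rfl
  have hba : b = a i := by
    have : (.xval i b : Vtx n m) = .xval i (a i) := by rw [← ha i, ← hs_eq, hsb]
    exact (Vtx.xval.inj this).2
  exact ⟨i, hba ▸ hb⟩

end PathToAssignment

section AssignmentToPath

variable {a : Fin n → Bool} {κ : Fin m → Fin n}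

theorem SatR.onLap_of_onLap (hκ : ∀ j, pol j (κ j) = some (a (κ j))) {u v : Vtx n m}
    (h : SatR pol u v) {a' : Fin n → Bool} (hv : v.OnLap a' κ) : u.OnLap a κ := by
  cases h with
  | lit j k b hb =>
    obtain rfl : k = κ j := hv
    exact Option.some.inj (hb.symm.trans (hκ j))
  | _ => trivial

theorem exists_two_laps (hκ : ∀ j, pol j (κ j) ≠ none) (a a' : Fin n → Bool) :
    ∃ ρ : ℕ → ValidVtx pol, (∀ i, (ρ i).1.rank = i % (2 * n + 2 * m + 2)) ∧
      (∀ i < 2 * n + 2 * m + 2, (ρ i).1.OnLap a κ) ∧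
      ∀ i ≥ 2 * n + 2 * m + 2, (ρ i).1.OnLap a' κ := by
  have hvertex (i : ℕ) : ∃ v : Vtx n m,
      v.OnLap (if i < 2 * n + 2 * m + 2 then a else a') κ ∧
        v.rank = i % (2 * n + 2 * m + 2) :=
    Vtx.exists_onLap_rank_eq _ κ (Nat.mod_lt _ (by lia))
  choose ρ hlap hrank using hvertex
  refine ⟨fun i => ⟨ρ i, (hlap i).vtxValid hκ⟩, hrank, fun i hi => ?_, fun i hi => ?_⟩
  · simpa only [if_pos hi] using hlap i
  · simpa only [if_neg hi.not_gt] using hlap i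

theorem firstVisits_of_two_laps (hκ : ∀ j, pol j (κ j) = some (a (κ j)))
    {ρ : ℕ → ValidVtx pol} (hrank : ∀ i, (ρ i).1.rank = i % (2 * n + 2 * m + 2))
    (hlap : ∀ i < 2 * n + 2 * m + 2, (ρ i).1.OnLap a κ)
    (hlap' : ∀ i ≥ 2 * n + 2 * m + 2, (ρ i).1.OnLap (fun k => !a k) κ) :
    FirstVisits (visitOrder pol) (2 * (2 * n + 2 * m + 2)) ρ := by
  have visit (u : ValidVtx pol) (hu : u.1.OnLap a κ) : ρ u.1.rank = u :=
    Subtype.ext ((hlap _ u.1.rank_lt).eq_of_rank_eq hu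
      ((hrank _).trans (Nat.mod_eq_of_lt u.1.rank_lt)))
  have visit' (u : ValidVtx pol) (hu : u.1.OnLap (fun k => !a k) κ) :
      ρ (2 * n + 2 * m + 2 + u.1.rank) = u :=
    Subtype.ext ((hlap' _ (Nat.le_add_right _ _)).eq_of_rank_eq hu
      (by rw [hrank, Nat.add_mod_left, Nat.mod_eq_of_lt u.1.rank_lt]))
  rintro ⟨u, v⟩ (huv : SatR pol u.1 v.1)
  have hu_lt := u.1.rank_lt
  constructor
  · rcases huv.onLap_or_onLap_not a κ with hu | hu
    · exact ⟨_, by lia, visit u hu⟩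
    · exact ⟨_, by lia, visit' u hu⟩
  · rintro i - rfl
    have hu : u.1.OnLap a κ := by
      rcases lt_or_ge i (2 * n + 2 * m + 2) with hi | hi
      · exact huv.onLap_of_onLap hκ (hlap i hi)
      · exact huv.onLap_of_onLap hκ (hlap' i hi)
    exact ⟨u.1.rank, huv.rank_lt.trans_le ((hrank i).trans_le (Nat.mod_le _ _)), visit u hu⟩

theorem exists_path_of_satisfying (hn : 1 ≤ n) (hm : 1 ≤ m)
    (ha : ∀ j, ∃ i, pol j i = some (a i)) :
    ∃ (k : ℕ) (ρ : ℕ → ValidVtx pol),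
      IsPath (ValidEdge pol) k ρ ∧ FirstVisits (visitOrder pol) k ρ := by
  choose κ hκ using ha
  obtain ⟨ρ, hrank, hlap, hlap'⟩ := exists_two_laps
    (fun j => Option.ne_none_iff_exists'.mpr ⟨_, hκ j⟩) a (fun k => !a k)
  refine ⟨_, ρ, fun i _ => ?_, firstVisits_of_two_laps hκ hrank hlap hlap'⟩
  exact edge_of_rank_eq hn hm (ρ i).2 (ρ (i + 1)).2 (by rw [hrank, hrank, Nat.mod_add_mod])

end AssignmentToPath

end Reduction

theorem sat_reduction {n m : ℕ} (hn : 1 ≤ n) (hm : 1 ≤ m)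
    (pol : Fin m → Fin n → Option Bool)
    (hne : ∀ j : Fin m, ∃ k : Fin n, pol j k ≠ none) :
    (∀ u v : {v : Vtx n m // VtxValid pol v},
      Relation.ReflTransGen
        (fun a b : {v : Vtx n m // VtxValid pol v} => Edge pol a.1 b.1) u v) ∧
    ((∃ (k : ℕ) (ρ : ℕ → {v : Vtx n m // VtxValid pol v}),
        IsPath (fun a b : {v : Vtx n m // VtxValid pol v} => Edge pol a.1 b.1) k ρ ∧
        FirstVisits
          {p : {v : Vtx n m // VtxValid pol v} × {v : Vtx n m // VtxValid pol v} |
            SatR pol p.1.1 p.2.1} k ρ) ↔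
      ∃ a : Fin n → Bool, ∀ j : Fin m, ∃ k : Fin n, pol j k = some (a k)) := by
  refine ⟨reflTransGen_validEdge hn hm hne, ?_, ?_⟩
  · rintro ⟨k, ρ, hpath, hfirst⟩
    exact exists_satisfying_of_firstVisits hn hpath hfirst
  · rintro ⟨a, ha⟩
    exact exists_path_of_satisfying hn hm ha
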